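/- Let n ≥ 1, let u : ℝⁿ → ℝ be a Schwartz function, and let s, t ∈ (0,1) with s + t < 1. Define w(x) := c_{n,t} · lim_{ε→0⁺} ∫_{{y : |y−x| > ε}} (u(x) − u(y))/|x−y|^{n+2t} dy (this principal value limit exists at every x). Then for every x ∈ ℝⁿ the principal value limit c_{n,s} · lim_{ε→0⁺} ∫_{{y : |y−x| > ε}} (w(x) − w(y))/|x−y|^{n+2s} dy exists and equals c_{n,s+t} · lim_{ε→0⁺} ∫_{{y : |y−x| > ε}} (u(x) − u(y))/|x−y|^{n+2(s+t)} dy; that is, the fractional Laplacian enjoys the semigroup property (−Δ)^s (−Δ)^t u = (−Δ)^{s+t} u on Schwartz functions. -/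

import Mathlib

open MeasureTheory Filter Metric Set
open scoped Topology

/-- The normalization constant `c_{n,r} = (∫_{ℝⁿ} (1 − cos ζ₁)/|ζ|^{n+2r} dζ)⁻¹`. -/
noncomputable def fracC (n : ℕ) (hn : 1 ≤ n) (r : ℝ) : ℝ :=
  (∫ ζ : EuclideanSpace ℝ (Fin n),
    (1 - Real.cos (ζ ⟨0, hn⟩)) / ‖ζ‖ ^ ((n : ℝ) + 2 * r))⁻¹

/-!
For a symmetric jump kernel `K`, cutting off the jumps `‖z‖ ≤ ε` leaves an integrable kernel, and
Fubini shows that the cut-off operator acts on `𝓕⁻ g` by multiplying `g` with the cut-off symbol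
`∫_{‖z‖ > ε} (1 - cos ⟪2πξ, z⟫) K z dz`. The symbols are dominated by their limit as `ε → 0`, so the
principal value of `𝓕⁻ g` exists and is again an inverse Fourier transform as soon as `g` and its
product with the limiting symbol are integrable. For `K z = ‖z‖^{-(d+2r)}`, scaling and reflections
show that the symbol at `v` is `‖v‖^{2r}` times its value at any unit vector `e`; that value is
`c_{d,r}⁻¹`, so `(-Δ)^r` is the multiplier `|2πξ|^{2r}`, and the semigroup property becomes
`|2πξ|^{2s} |2πξ|^{2t} = |2πξ|^{2(s+t)}`. That `w` need not be a Schwartz function is harmless, as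
only integrability on the Fourier side is used.
-/

open Module (finrank)
open scoped FourierTransform RealInnerProductSpace

section LevyDensity

variable {V : Type*} [NormedAddCommGroup V]

/-- The kernel `K` with its small jumps `‖z‖ ≤ ε` removed. -/
noncomputable def truncatedKernel (K : V → ℝ) (ε : ℝ) : V → ℝ :=
  {z | ε < ‖z‖}.indicator K

lemma truncatedKernel_of_lt {K : V → ℝ} {ε : ℝ} {z : V} (hz : ε < ‖z‖) :
    truncatedKernel K ε z = K z :=
  indicator_of_mem (s := {z | ε < ‖z‖}) hz K

lemma truncatedKernel_of_le {K : V → ℝ} {ε : ℝ} {z : V} (hz : ‖z‖ ≤ ε) :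
    truncatedKernel K ε z = 0 :=
  indicator_of_notMem (s := {z | ε < ‖z‖}) hz.not_gt K

variable [InnerProductSpace ℝ V]

lemma one_sub_cos_inner_nonneg (v z : V) : 0 ≤ 1 - Real.cos ⟪v, z⟫ :=
  sub_nonneg.2 (Real.cos_le_one _)

lemma one_sub_cos_inner_le (v z : V) :
    1 - Real.cos ⟪v, z⟫ ≤ (2 + ‖v‖ ^ 2) * min 1 (‖z‖ ^ 2) := by
  rcases min_cases 1 (‖z‖ ^ 2) with ⟨hmin, -⟩ | ⟨hmin, -⟩ <;> rw [hmin]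
  · linarith [Real.neg_one_le_cos ⟪v, z⟫, sq_nonneg ‖v‖]
  · have hinner : ⟪v, z⟫ ^ 2 ≤ ‖v‖ ^ 2 * ‖z‖ ^ 2 := by
      rw [← mul_pow]
      exact sq_le_sq.2 ((abs_real_inner_le_norm v z).trans (le_abs_self _))
    linarith [Real.one_sub_sq_div_two_le_cos (x := ⟪v, z⟫), sq_nonneg ‖z‖, sq_nonneg ⟪v, z⟫]

variable [FiniteDimensional ℝ V] [MeasurableSpace V] [BorelSpace V] {K K' : V → ℝ}

/-- A symmetric Lévy density: the jump kernel of a translation-invariant nonlocal operator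
`f ↦ p.v. ∫ (f x - f (x + z)) K z dz`. It need not be integrable near the origin. -/
structure IsLevyDensity (K : V → ℝ) : Prop where
  measurable : Measurable K
  nonneg : ∀ z, 0 ≤ K z
  even : Function.Even K
  integrable : Integrable fun z => min 1 (‖z‖ ^ 2) * K z

/-- The Lévy–Khintchine symbol of the kernel `K`: the nonlocal operator with jump kernel `K` maps
`exp (i⟪v, ·⟫)` to `levySymbol K v` times itself. -/
noncomputable def levySymbol (K : V → ℝ) (v : V) : ℝ :=
  ∫ z, (1 - Real.cos ⟪v, z⟫) * K z

lemma levySymbol_nonneg (hK : ∀ z, 0 ≤ K z) (v : V) : 0 ≤ levySymbol K v :=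
  integral_nonneg fun z => mul_nonneg (one_sub_cos_inner_nonneg v z) (hK z)

lemma measurable_levySymbol (hK : Measurable K) : Measurable (levySymbol K) := by
  have huncurry : StronglyMeasurable
      (Function.uncurry fun v z : V => (1 - Real.cos ⟪v, z⟫) * K z) := by
    refine Measurable.stronglyMeasurable ?_
    unfold Function.uncurry
    fun_prop
  exact huncurry.integral_prod_right.measurable

lemma levySymbol_map_linearIsometryEquiv (R : V ≃ₗᵢ[ℝ] V) (v : V) :
    levySymbol K (R v) = levySymbol (K ∘ R) v := by
  simpa only [levySymbol, R.inner_map_map, Function.comp_apply] using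
    (R.measurePreserving.integral_comp R.toHomeomorph.measurableEmbedding
      fun z => (1 - Real.cos ⟪R v, z⟫) * K z).symm

lemma levySymbol_const_mul (c : ℝ) (v : V) :
    levySymbol (fun z => c * K z) v = c * levySymbol K v := by
  simp only [levySymbol, mul_left_comm _ c, integral_const_mul]

lemma levySymbol_smul {a : ℝ} (ha : 0 < a) (v : V) :
    levySymbol K (a • v) = a⁻¹ ^ finrank ℝ V * levySymbol (fun z => K (a⁻¹ • z)) v := by
  have hsubst := Measure.integral_comp_smul_of_nonneg volume
    (fun z : V => (1 - Real.cos ⟪v, z⟫) * K (a⁻¹ • z)) a (hR := ha.le)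
  simp only [inv_smul_smul₀ ha.ne', smul_eq_mul, ← inv_pow] at hsubst
  simpa only [levySymbol, real_inner_smul_left, real_inner_smul_right] using hsubst

namespace IsLevyDensity

lemma integrable_one_sub_cos_mul (hK : IsLevyDensity K) (v : V) :
    Integrable fun z => (1 - Real.cos ⟪v, z⟫) * K z := by
  have hmeas := hK.measurable
  refine (hK.integrable.const_mul (2 + ‖v‖ ^ 2)).mono'
    (Measurable.aestronglyMeasurable (by fun_prop)) (.of_forall fun z => ?_)
  rw [Real.norm_of_nonneg (mul_nonneg (one_sub_cos_inner_nonneg v z) (hK.nonneg z)), ← mul_assoc]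
  exact mul_le_mul_of_nonneg_right (one_sub_cos_inner_le v z) (hK.nonneg z)

lemma truncatedKernel_le (hK : IsLevyDensity K) (ε : ℝ) (z : V) : truncatedKernel K ε z ≤ K z :=
  indicator_le_self' (fun z _ => hK.nonneg z) z

protected lemma truncatedKernel (hK : IsLevyDensity K) (ε : ℝ) :
    IsLevyDensity (truncatedKernel K ε) where
  measurable := hK.measurable.indicator (measurableSet_lt measurable_const measurable_norm)
  nonneg := indicator_nonneg fun z _ => hK.nonneg z
  even z := by simp only [truncatedKernel, indicator, mem_ofPred_eq, norm_neg, hK.even z]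
  integrable := by
    refine (hK.integrable.indicator
      (measurableSet_lt (measurable_const (a := ε)) measurable_norm)).congr (.of_forall fun z => ?_)
    exact indicator_mul_right {z | ε < ‖z‖} (fun z => min 1 (‖z‖ ^ 2)) K

lemma integrable_truncatedKernel (hK : IsLevyDensity K) {ε : ℝ} (hε : 0 < ε) :
    Integrable (truncatedKernel K ε) := by
  have htrunc := hK.truncatedKernel ε
  have hmin : 0 < min 1 (ε ^ 2) := by positivity
  refine (htrunc.integrable.const_mul (min 1 (ε ^ 2))⁻¹).mono'
    htrunc.measurable.aestronglyMeasurable (.of_forall fun z => ?_)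
  rw [Real.norm_of_nonneg (htrunc.nonneg z)]
  rcases lt_or_ge ε ‖z‖ with hz | hz
  · rw [← mul_assoc, inv_mul_eq_div]
    refine le_mul_of_one_le_left (htrunc.nonneg z) ((one_le_div hmin).2 ?_)
    gcongr
  · simp only [truncatedKernel_of_le hz, mul_zero, le_refl]

lemma levySymbol_mono (hK : IsLevyDensity K) (hK' : IsLevyDensity K') (hle : ∀ z, K z ≤ K' z)
    (v : V) : levySymbol K v ≤ levySymbol K' v :=
  integral_mono (hK.integrable_one_sub_cos_mul v) (hK'.integrable_one_sub_cos_mul v)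
    fun z => mul_le_mul_of_nonneg_left (hle z) (one_sub_cos_inner_nonneg v z)

lemma tendsto_levySymbol_truncatedKernel (hK : IsLevyDensity K) (v : V) :
    Tendsto (fun ε => levySymbol (truncatedKernel K ε) v) (𝓝[>] 0) (𝓝 (levySymbol K v)) := by
  refine tendsto_integral_filter_of_dominated_convergence _
    (.of_forall fun ε => ((hK.truncatedKernel ε).integrable_one_sub_cos_mul v).aestronglyMeasurable)
    (.of_forall fun ε => .of_forall fun z => ?_) (hK.integrable_one_sub_cos_mul v)
    (.of_forall fun z => ?_)
  · have hcos := one_sub_cos_inner_nonneg v z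
    rw [Real.norm_of_nonneg (mul_nonneg hcos ((hK.truncatedKernel ε).nonneg z))]
    exact mul_le_mul_of_nonneg_left (hK.truncatedKernel_le ε z) hcos
  · rcases eq_or_ne z 0 with rfl | hz
    · simp only [inner_zero_right, Real.cos_zero, sub_self, zero_mul, tendsto_const_nhds_iff]
    · refine tendsto_const_nhds.congr' ?_
      filter_upwards [mem_nhdsWithin_of_mem_nhds (Iio_mem_nhds (norm_pos_iff.2 hz))] with ε hε
      rw [truncatedKernel_of_lt hε]

lemma levySymbol_pos (hK : IsLevyDensity K) (hpos : ∀ z ≠ 0, 0 < K z) {v : V} (hv : v ≠ 0) :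
    0 < levySymbol K v := by
  have hnonneg : ∀ z, 0 ≤ (1 - Real.cos ⟪v, z⟫) * K z := fun z =>
    mul_nonneg (one_sub_cos_inner_nonneg v z) (hK.nonneg z)
  rw [levySymbol, integral_pos_iff_support_of_nonneg hnonneg (hK.integrable_one_sub_cos_mul v)]
  have hopen : IsOpen {z : V | Real.cos ⟪v, z⟫ < 1} := isOpen_lt (by fun_prop) continuous_const
  have hnonempty : {z : V | Real.cos ⟪v, z⟫ < 1}.Nonempty := by
    refine ⟨(Real.pi / ‖v‖ ^ 2) • v, ?_⟩
    have hv' : ‖v‖ ^ 2 ≠ 0 := by positivity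
    rw [mem_ofPred_eq, real_inner_smul_right, real_inner_self_eq_norm_sq, div_mul_cancel₀ _ hv',
      Real.cos_pi]
    norm_num
  refine (hopen.measure_pos volume hnonempty).trans_le (measure_mono fun z hz => ?_)
  have hz0 : z ≠ 0 := by
    rintro rfl
    simp at hz
  exact (mul_pos (sub_pos.2 hz) (hpos z hz0)).ne'

end IsLevyDensity

end LevyDensity

section JumpIntegral

variable {V G : Type*} [NormedAddCommGroup V] [InnerProductSpace ℝ V] [FiniteDimensional ℝ V]
  [MeasurableSpace V] [BorelSpace V] [NormedAddCommGroup G] [NormedSpace ℝ G]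
  {F : Type*} [NormedAddCommGroup F] [NormedSpace ℂ F] {K : V → ℝ} {g : V → F}

/-- The nonlocal operator with jump kernel `K`, as an absolutely convergent integral. The principal
value for a singular `K` is the limit of `jumpIntegral (truncatedKernel K ε)` as `ε → 0⁺`. -/
noncomputable def jumpIntegral (K : V → ℝ) (f : V → G) (x : V) : G :=
  ∫ z, K z • (f x - f (x + z))

lemma setIntegral_smul_sub_eq_jumpIntegral (hK : Function.Even K) (ε : ℝ) (f : V → G) (x : V) :
    ∫ y in {y | ε < ‖y - x‖}, K (x - y) • (f x - f y) =
      jumpIntegral (truncatedKernel K ε) f x := by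
  have hmeas : MeasurableSet {y : V | ε < ‖y - x‖} :=
    measurableSet_lt measurable_const (by fun_prop)
  rw [← integral_indicator hmeas, ← integral_add_left_eq_self _ x]
  refine integral_congr_ae (.of_forall fun z => ?_)
  simp only [truncatedKernel, indicator, mem_ofPred_eq, add_sub_cancel_left, sub_add_cancel_left,
    hK z, ite_smul, zero_smul]

lemma integrable_uncurry_smul_fourierChar_sub (hK : Integrable K) (hg : Integrable g) (x : V) :
    Integrable (Function.uncurry fun z ξ : V =>
      K z • (𝐞 ⟪ξ, x⟫ • g ξ - 𝐞 ⟪ξ, x + z⟫ • g ξ)) (volume.prod volume) := by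
  refine ((hK.smul_prod hg).norm.const_mul 2).mono' ?_ (.of_forall fun ⟨z, ξ⟩ => ?_)
  · unfold Function.uncurry
    have hgm := hg.aestronglyMeasurable.comp_snd (μ := (volume : Measure V))
    exact hK.aestronglyMeasurable.comp_fst.smul
      (((Continuous.aestronglyMeasurable (by fun_prop)).smul hgm).sub
        ((Continuous.aestronglyMeasurable (by fun_prop)).smul hgm))
  · calc ‖K z • (𝐞 ⟪ξ, x⟫ • g ξ - 𝐞 ⟪ξ, x + z⟫ • g ξ)‖
        ≤ ‖K z‖ * (‖g ξ‖ + ‖g ξ‖) := by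
          rw [norm_smul]
          gcongr
          exact (norm_sub_le _ _).trans_eq (by rw [Circle.norm_smul, Circle.norm_smul])
      _ = 2 * ‖K z • g ξ‖ := by rw [norm_smul]; ring

lemma fourierInv_sub_fourierInv_add (hg : Integrable g) (x z : V) :
    𝓕⁻ g x - 𝓕⁻ g (x + z) = ∫ ξ, (𝐞 ⟪ξ, x⟫ • g ξ - 𝐞 ⟪ξ, x + z⟫ • g ξ) := by
  have hint (y : V) : Integrable fun ξ => 𝐞 ⟪ξ, y⟫ • g ξ := by
    simpa only [inner_neg_right, neg_neg] using (Real.fourierIntegral_convergent_iff (-y)).2 hg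
  rw [Real.fourierInv_eq, Real.fourierInv_eq, integral_sub (hint x) (hint (x + z))]

lemma integrable_smul_fourierInv_sub (hK : Integrable K) (hg : Integrable g) (x : V) :
    Integrable fun z => K z • (𝓕⁻ g x - 𝓕⁻ g (x + z)) := by
  simpa only [fourierInv_sub_fourierInv_add hg, Function.uncurry, integral_smul] using
    (integrable_uncurry_smul_fourierChar_sub hK hg x).integral_prod_left

lemma sub_fourierChar_smul_add_sub_fourierChar_neg_smul (θ : ℝ) (h : F) :
    (h - 𝐞 θ • h) + (h - 𝐞 (-θ) • h) = (2 * (1 - Real.cos (2 * Real.pi * θ))) • h := by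
  have hcos : (𝐞 θ : ℂ) + 𝐞 (-θ) = 2 * Complex.cos (2 * Real.pi * θ) := by
    rw [Real.fourierChar_apply, Real.fourierChar_apply, Complex.two_cos]
    push_cast
    ring_nf
  simp only [Circle.smul_def, ← Complex.coe_smul]
  push_cast
  rw [mul_sub, ← hcos]
  module

variable [CompleteSpace F]

/-- Symmetrising in `z` turns the character into its cosine. -/
lemma integral_smul_sub_fourierChar_smul (hK : Integrable K) (hKeven : Function.Even K)
    (ξ : V) (h : F) :
    ∫ z, K z • (h - 𝐞 ⟪ξ, z⟫ • h) = levySymbol K ((2 * Real.pi) • ξ) • h := by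
  have hint : Integrable fun z => K z • (h - 𝐞 ⟪ξ, z⟫ • h) := by
    refine (hK.norm.mul_const (‖h‖ + ‖h‖)).mono' (hK.aestronglyMeasurable.smul
      (Continuous.aestronglyMeasurable (by fun_prop))) (.of_forall fun z => ?_)
    rw [norm_smul]
    gcongr
    exact (norm_sub_le _ _).trans_eq (by rw [Circle.norm_smul])
  have hsymm : (2 : ℝ) • ∫ z, K z • (h - 𝐞 ⟪ξ, z⟫ • h) =
      (2 : ℝ) • levySymbol K ((2 * Real.pi) • ξ) • h := by
    calc (2 : ℝ) • ∫ z, K z • (h - 𝐞 ⟪ξ, z⟫ • h)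
        = ∫ z, (K z • (h - 𝐞 ⟪ξ, z⟫ • h) + K (-z) • (h - 𝐞 ⟪ξ, -z⟫ • h)) := by
          rw [integral_add hint hint.comp_neg,
            integral_neg_eq_self fun z => K z • (h - 𝐞 ⟪ξ, z⟫ • h), two_smul]
      _ = ∫ z, ((2 : ℝ) * ((1 - Real.cos ⟪(2 * Real.pi) • ξ, z⟫) * K z)) • h := by
          congr with z
          rw [hKeven z, ← smul_add, inner_neg_right,
            sub_fourierChar_smul_add_sub_fourierChar_neg_smul, real_inner_smul_left, smul_smul]
          ring_nf
      _ = (2 : ℝ) • levySymbol K ((2 * Real.pi) • ξ) • h := by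
          rw [integral_smul_const, integral_const_mul, smul_smul, levySymbol]
  exact smul_right_injective F two_ne_zero hsymm

lemma jumpIntegral_fourierInv (hK : Integrable K) (hKeven : Function.Even K) (hg : Integrable g)
    (x : V) :
    jumpIntegral K (𝓕⁻ g) x = 𝓕⁻ (fun ξ => levySymbol K ((2 * Real.pi) • ξ) • g ξ) x := by
  calc jumpIntegral K (𝓕⁻ g) x
      = ∫ z, ∫ ξ, K z • (𝐞 ⟪ξ, x⟫ • g ξ - 𝐞 ⟪ξ, x + z⟫ • g ξ) := by
        simp only [jumpIntegral, fourierInv_sub_fourierInv_add hg, integral_smul]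
    _ = ∫ ξ, ∫ z, K z • (𝐞 ⟪ξ, x⟫ • g ξ - 𝐞 ⟪ξ, x + z⟫ • g ξ) :=
        integral_integral_swap (integrable_uncurry_smul_fourierChar_sub hK hg x)
    _ = ∫ ξ, levySymbol K ((2 * Real.pi) • ξ) • 𝐞 ⟪ξ, x⟫ • g ξ := by
        congr with ξ
        rw [← integral_smul_sub_fourierChar_smul hK hKeven]
        simp only [inner_add_right, add_comm ⟪ξ, x⟫, AddChar.map_add_eq_mul, mul_smul]
    _ = 𝓕⁻ (fun ξ => levySymbol K ((2 * Real.pi) • ξ) • g ξ) x := by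
        rw [Real.fourierInv_eq]
        congr with ξ
        rw [smul_comm]

lemma IsLevyDensity.tendsto_jumpIntegral_fourierInv (hK : IsLevyDensity K) (hg : Integrable g)
    (hKg : Integrable fun ξ => levySymbol K ((2 * Real.pi) • ξ) • g ξ) (x : V) :
    Tendsto (fun ε => jumpIntegral (truncatedKernel K ε) (𝓕⁻ g) x) (𝓝[>] 0)
      (𝓝 (𝓕⁻ (fun ξ => levySymbol K ((2 * Real.pi) • ξ) • g ξ) x)) := by
  have hfourier : ∀ᶠ ε in 𝓝[>] (0 : ℝ),
      𝓕⁻ (fun ξ => levySymbol (truncatedKernel K ε) ((2 * Real.pi) • ξ) • g ξ) x =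
        jumpIntegral (truncatedKernel K ε) (𝓕⁻ g) x := by
    filter_upwards [self_mem_nhdsWithin] with ε hε
    exact (jumpIntegral_fourierInv (hK.integrable_truncatedKernel hε)
      (hK.truncatedKernel ε).even hg x).symm
  refine Tendsto.congr' hfourier ?_
  simp only [Real.fourierInv_eq]
  refine tendsto_integral_filter_of_dominated_convergence _
    (.of_forall fun ε => ?_) (.of_forall fun ε => .of_forall fun ξ => ?_) hKg.norm
    (.of_forall fun ξ => ?_)
  · have hsymbol := measurable_levySymbol (hK.truncatedKernel ε).measurable
    exact (Continuous.aestronglyMeasurable (by fun_prop)).smul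
      ((hsymbol.comp (measurable_const_smul _)).aestronglyMeasurable.smul hg.aestronglyMeasurable)
  · rw [Circle.norm_smul, norm_smul, norm_smul,
      Real.norm_of_nonneg (levySymbol_nonneg (hK.truncatedKernel ε).nonneg _),
      Real.norm_of_nonneg (levySymbol_nonneg hK.nonneg _)]
    gcongr
    exact (hK.truncatedKernel ε).levySymbol_mono hK (hK.truncatedKernel_le ε) _
  · exact ((hK.tendsto_levySymbol_truncatedKernel _).smul_const _).const_smul _

lemma jumpIntegral_comp_continuousLinearMap [CompleteSpace G] (T : F →L[ℝ] G)
    {f : V → F} {x : V} (hf : Integrable fun z => K z • (f x - f (x + z))) :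
    jumpIntegral K (T ∘ f) x = T (jumpIntegral K f x) := by
  simpa only [jumpIntegral, Function.comp_apply, map_smul, map_sub] using T.integral_comp_comm hf

lemma IsLevyDensity.tendsto_jumpIntegral_comp_fourierInv [CompleteSpace G]
    (hK : IsLevyDensity K) (T : F →L[ℝ] G) (hg : Integrable g)
    (hKg : Integrable fun ξ => levySymbol K ((2 * Real.pi) • ξ) • g ξ) (x : V) :
    Tendsto (fun ε => jumpIntegral (truncatedKernel K ε) (T ∘ 𝓕⁻ g) x) (𝓝[>] 0)
      (𝓝 (T (𝓕⁻ (fun ξ => levySymbol K ((2 * Real.pi) • ξ) • g ξ) x))) := by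
  refine ((T.continuous.tendsto _).comp (hK.tendsto_jumpIntegral_fourierInv hg hKg x)).congr' ?_
  filter_upwards [self_mem_nhdsWithin] with ε hε
  exact (jumpIntegral_comp_continuousLinearMap T
    (integrable_smul_fourierInv_sub (hK.integrable_truncatedKernel hε) hg x)).symm

end JumpIntegral

section FracKernel

variable {V : Type*} [NormedAddCommGroup V]

lemma integrable_min_one_norm_sq_mul_rpow_norm [NormedSpace ℝ V] [FiniteDimensional ℝ V]
    [MeasurableSpace V] [BorelSpace V] (μ : Measure V) [μ.IsAddHaarMeasure] {r : ℝ} (hr0 : 0 < r)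
    (hr1 : r < 1) :
    Integrable (fun z : V => min 1 (‖z‖ ^ 2) * (‖z‖ ^ (finrank ℝ V + 2 * r))⁻¹) μ := by
  rcases subsingleton_or_nontrivial V with _ | _
  · simp [Subsingleton.elim _ (0 : V)]
  have hradial : ∀ y : ℝ, 0 < y → ∀ m : ℝ,
      y ^ (finrank ℝ V - 1) * (m * (y ^ (finrank ℝ V + 2 * r))⁻¹) = m * y ^ (-1 - 2 * r) := by
    intro y hy m
    rw [mul_left_comm, ← Real.rpow_neg hy.le, ← Real.rpow_natCast, ← Real.rpow_add hy,
      Nat.cast_sub Module.finrank_pos]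
    congr 2
    push_cast
    ring
  rw [integrable_fun_norm_addHaar μ
    (f := fun y => min 1 (y ^ 2) * (y ^ (finrank ℝ V + 2 * r))⁻¹),
    ← Ioc_union_Ioi_eq_Ioi zero_le_one]
  refine .union ?_ ?_
  · have hint : IntegrableOn (fun y : ℝ => y ^ (1 - 2 * r)) (Ioc 0 1) :=
      (intervalIntegrable_iff_integrableOn_Ioc_of_le zero_le_one).1
        (intervalIntegral.intervalIntegrable_rpow' (by linarith))
    refine hint.congr_fun (fun y hy => ?_) measurableSet_Ioc
    rw [smul_eq_mul, hradial y hy.1, min_eq_right (pow_le_one₀ hy.1.le hy.2), ← Real.rpow_natCast,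
      ← Real.rpow_add hy.1]
    ring_nf
  · have hint : IntegrableOn (fun y : ℝ => y ^ (-1 - 2 * r)) (Ioi 1) :=
      integrableOn_Ioi_rpow_of_lt (by linarith) zero_lt_one
    refine hint.congr_fun (fun y hy => ?_) measurableSet_Ioi
    rw [smul_eq_mul, hradial y (zero_lt_one.trans hy), min_eq_left (one_le_pow₀ (le_of_lt hy)),
      one_mul]

/-- The kernel `‖z‖^{-(d+2r)}`, `d = dim V`, of the fractional Laplacian `(-Δ)^r`, without the
normalization constant. -/
noncomputable def fracKernel [Module ℝ V] (r : ℝ) (z : V) : ℝ :=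
  (‖z‖ ^ (finrank ℝ V + 2 * r))⁻¹

lemma fracKernel_even [Module ℝ V] (r : ℝ) : Function.Even (fracKernel r : V → ℝ) := fun z => by
  rw [fracKernel, fracKernel, norm_neg]

lemma fracKernel_pos [Module ℝ V] (r : ℝ) {z : V} (hz : z ≠ 0) : 0 < fracKernel r z := by
  have := norm_pos_iff.2 hz
  unfold fracKernel
  positivity

lemma fracKernel_smul [NormedSpace ℝ V] (r : ℝ) {a : ℝ} (ha : 0 ≤ a) (z : V) :
    fracKernel r (a • z) = (a ^ (finrank ℝ V + 2 * r))⁻¹ * fracKernel r z := by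
  rw [fracKernel, fracKernel, norm_smul, Real.norm_of_nonneg ha,
    Real.mul_rpow ha (norm_nonneg z), mul_inv]

variable [InnerProductSpace ℝ V]

lemma fracKernel_comp_linearIsometryEquiv (r : ℝ) (R : V ≃ₗᵢ[ℝ] V) :
    fracKernel r ∘ R = fracKernel r := by
  ext z
  rw [Function.comp_apply, fracKernel, fracKernel, R.norm_map]

variable [FiniteDimensional ℝ V] [MeasurableSpace V] [BorelSpace V] {r : ℝ}

lemma isLevyDensity_fracKernel (hr0 : 0 < r) (hr1 : r < 1) :
    IsLevyDensity (fracKernel r : V → ℝ) where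
  measurable := by
    unfold fracKernel
    fun_prop
  nonneg z := by
    unfold fracKernel
    positivity
  even := fracKernel_even r
  integrable := integrable_min_one_norm_sq_mul_rpow_norm volume hr0 hr1

lemma levySymbol_fracKernel_smul (r : ℝ) {a : ℝ} (ha : 0 < a) (v : V) :
    levySymbol (fracKernel r) (a • v) = a ^ (2 * r) * levySymbol (fracKernel r) v := by
  have hpow : a⁻¹ ^ finrank ℝ V * (a⁻¹ ^ (finrank ℝ V + 2 * r))⁻¹ = a ^ (2 * r) := by
    rw [Real.inv_rpow ha.le, inv_inv, Real.rpow_add ha, Real.rpow_natCast, inv_pow,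
      inv_mul_cancel_left₀ (by positivity)]
  have hkernel : (fun z : V => fracKernel r (a⁻¹ • z)) =
      fun z => (a⁻¹ ^ (finrank ℝ V + 2 * r))⁻¹ * fracKernel r z :=
    funext (fracKernel_smul r (inv_nonneg.2 ha.le))
  rw [levySymbol_smul ha, hkernel, levySymbol_const_mul, ← mul_assoc, hpow]

lemma levySymbol_fracKernel (hr : r ≠ 0) {e : V} (he : ‖e‖ = 1) (v : V) :
    levySymbol (fracKernel r) v = ‖v‖ ^ (2 * r) * levySymbol (fracKernel r) e := by
  rcases eq_or_ne v 0 with rfl | hv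
  · simp [levySymbol, Real.zero_rpow, hr]
  have hnorm : ‖‖v‖ • e‖ = ‖v‖ := by rw [norm_smul, norm_norm, he, mul_one]
  let R : V ≃ₗᵢ[ℝ] V := (ℝ ∙ (‖v‖ • e - v))ᗮ.reflection
  have hR : R (‖v‖ • e) = v := Submodule.reflection_sub hnorm
  calc levySymbol (fracKernel r) v
      = levySymbol (fracKernel r) (R (‖v‖ • e)) := by rw [hR]
    _ = levySymbol (fracKernel r) (‖v‖ • e) := by
        rw [levySymbol_map_linearIsometryEquiv, fracKernel_comp_linearIsometryEquiv]
    _ = ‖v‖ ^ (2 * r) * levySymbol (fracKernel r) e :=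
        levySymbol_fracKernel_smul r (norm_pos_iff.2 hv) e

end FracKernel

section FracMultiplier

variable {V F : Type*} [NormedAddCommGroup V] {r s t : ℝ}

/-- The Fourier multiplier `|2πξ|^{2r}` of `(-Δ)^r`, for the Fourier transform with character
`e^{-2πi⟪ξ, x⟫}`. -/
noncomputable def fracMultiplier (r : ℝ) (ξ : V) : ℝ :=
  (2 * Real.pi * ‖ξ‖) ^ (2 * r)

lemma fracMultiplier_nonneg (r : ℝ) (ξ : V) : 0 ≤ fracMultiplier r ξ := by
  unfold fracMultiplier
  positivity

lemma fracMultiplier_add (hs : 0 ≤ s) (ht : 0 ≤ t) (ξ : V) :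
    fracMultiplier (s + t) ξ = fracMultiplier s ξ * fracMultiplier t ξ := by
  rw [fracMultiplier, mul_add, Real.rpow_add_of_nonneg (by positivity) (by positivity)
    (by positivity), fracMultiplier, fracMultiplier]

lemma fracMultiplier_le_one_add (hs : 0 ≤ s) (hst : s ≤ t) (ξ : V) :
    fracMultiplier s ξ ≤ 1 + fracMultiplier t ξ := by
  have ht := fracMultiplier_nonneg t ξ
  rcases le_total (2 * Real.pi * ‖ξ‖) 1 with h | h
  · exact (Real.rpow_le_one (by positivity) h (by positivity)).trans (by linarith)
  · exact (Real.rpow_le_rpow_of_exponent_le h (by gcongr)).trans (le_add_of_nonneg_left zero_le_one)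

variable [MeasurableSpace V] [BorelSpace V] [NormedAddCommGroup F] [NormedSpace ℝ F] {g : V → F}
  {μ : Measure V}

lemma aestronglyMeasurable_fracMultiplier_smul (r : ℝ) (hg : AEStronglyMeasurable g μ) :
    AEStronglyMeasurable (fun ξ => fracMultiplier r ξ • g ξ) μ := by
  unfold fracMultiplier
  exact (Measurable.aestronglyMeasurable (by fun_prop)).smul hg

lemma integrable_fracMultiplier_smul_of_le (hs : 0 ≤ s) (hst : s ≤ t) (hg : Integrable g μ)
    (hgt : Integrable (fun ξ => fracMultiplier t ξ • g ξ) μ) :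
    Integrable (fun ξ => fracMultiplier s ξ • g ξ) μ := by
  refine (hg.norm.add hgt.norm).mono'
    (aestronglyMeasurable_fracMultiplier_smul s hg.aestronglyMeasurable) (.of_forall fun ξ => ?_)
  rw [norm_smul, Pi.add_apply, norm_smul, Real.norm_of_nonneg (fracMultiplier_nonneg s ξ),
    Real.norm_of_nonneg (fracMultiplier_nonneg t ξ), ← one_add_mul]
  gcongr
  exact fracMultiplier_le_one_add hs hst ξ

lemma integrable_fracMultiplier_smul_schwartzMap [NormedSpace ℝ V] [SecondCountableTopology V]
    [μ.HasTemperateGrowth] (hr : 0 ≤ r) (g : SchwartzMap V F) :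
    Integrable (fun ξ => fracMultiplier r ξ • g ξ) μ := by
  refine integrable_fracMultiplier_smul_of_le hr (Nat.le_ceil r) g.integrable
    ((integrable_norm_iff (aestronglyMeasurable_fracMultiplier_smul _
      g.integrable.aestronglyMeasurable)).1 ?_)
  refine ((g.integrable_pow_mul μ (2 * ⌈r⌉₊)).const_mul ((2 * Real.pi) ^ (2 * ⌈r⌉₊))).congr
    (.of_forall fun ξ => ?_)
  simp only [norm_smul]
  rw [Real.norm_of_nonneg (fracMultiplier_nonneg _ ξ), fracMultiplier, ← mul_assoc, ← mul_pow,
    ← Real.rpow_natCast, Nat.cast_mul, Nat.cast_ofNat]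

end FracMultiplier

section Semigroup

variable {V F G : Type*} [NormedAddCommGroup V] [InnerProductSpace ℝ V] [FiniteDimensional ℝ V]
  [MeasurableSpace V] [BorelSpace V] [NormedAddCommGroup F] [NormedSpace ℂ F] [CompleteSpace F]
  [NormedAddCommGroup G] [NormedSpace ℝ G] [CompleteSpace G] {e : V} {g : V → F} {r s t : ℝ}

lemma levySymbol_fracKernel_two_pi_smul (hr : r ≠ 0) (he : ‖e‖ = 1) (ξ : V) :
    levySymbol (fracKernel r) ((2 * Real.pi) • ξ) =
      levySymbol (fracKernel r) e * fracMultiplier r ξ := by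
  rw [levySymbol_fracKernel hr he, norm_smul, Real.norm_of_nonneg Real.two_pi_pos.le,
    fracMultiplier, mul_comm]

lemma tendsto_jumpIntegral_fracKernel (hr0 : 0 < r) (hr1 : r < 1) (he : ‖e‖ = 1) (T : F →L[ℝ] G)
    (hg : Integrable g) (hgr : Integrable fun ξ => fracMultiplier r ξ • g ξ) (x : V) :
    Tendsto (fun ε => jumpIntegral (truncatedKernel (fracKernel r) ε) (T ∘ 𝓕⁻ g) x) (𝓝[>] 0)
      (𝓝 (levySymbol (fracKernel r) e • T (𝓕⁻ (fun ξ => fracMultiplier r ξ • g ξ) x))) := by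
  have hsymbol : (fun ξ => levySymbol (fracKernel r) ((2 * Real.pi) • ξ) • g ξ) =
      fun ξ => levySymbol (fracKernel r) e • fracMultiplier r ξ • g ξ := by
    ext ξ
    rw [levySymbol_fracKernel_two_pi_smul hr0.ne' he, mul_smul]
  have hlim := (isLevyDensity_fracKernel hr0 hr1).tendsto_jumpIntegral_comp_fourierInv T hg
    (hsymbol ▸ hgr.smul (levySymbol (fracKernel r) e)) x
  rw [hsymbol, Real.fourierInv_eq] at hlim
  simpa only [smul_comm _ (levySymbol (fracKernel r) e), integral_smul, map_smul,
    ← Real.fourierInv_eq] using hlim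

lemma levySymbol_fracKernel_ne_zero (hr0 : 0 < r) (hr1 : r < 1) (he : ‖e‖ = 1) :
    levySymbol (fracKernel r) e ≠ 0 :=
  ((isLevyDensity_fracKernel hr0 hr1).levySymbol_pos (fun _ => fracKernel_pos r)
    (norm_ne_zero_iff.1 (he.trans_ne one_ne_zero))).ne'

-- Composing with a real-linear `T` allows real-valued functions (`T = re`) besides complex ones.
theorem fractionalLaplacian_semigroup_general (hs : 0 < s) (ht : 0 < t) (hst : s + t < 1)
    (he : ‖e‖ = 1) (T : F →L[ℝ] G) (hg : Integrable g)
    (hgst : Integrable fun ξ => fracMultiplier (s + t) ξ • g ξ) {u w : V → G} (hu : u = T ∘ 𝓕⁻ g)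
    (hw : ∀ x, Tendsto (fun ε => (levySymbol (fracKernel t) e)⁻¹ •
      jumpIntegral (truncatedKernel (fracKernel t) ε) u x) (𝓝[>] 0) (𝓝 (w x))) (x : V) :
    ∃ L, Tendsto (fun ε => jumpIntegral (truncatedKernel (fracKernel (s + t)) ε) u x)
        (𝓝[>] 0) (𝓝 L) ∧
      Tendsto (fun ε => (levySymbol (fracKernel s) e)⁻¹ •
        jumpIntegral (truncatedKernel (fracKernel s) ε) w x) (𝓝[>] 0)
        (𝓝 ((levySymbol (fracKernel (s + t)) e)⁻¹ • L)) := by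
  have hgt : Integrable fun ξ => fracMultiplier t ξ • g ξ :=
    integrable_fracMultiplier_smul_of_le ht.le (by linarith) hg hgst
  have hmul : (fun ξ => fracMultiplier s ξ • fracMultiplier t ξ • g ξ) =
      fun ξ => fracMultiplier (s + t) ξ • g ξ := by
    ext ξ
    rw [fracMultiplier_add hs.le ht.le, mul_smul]
  have hw_fourier : w = T ∘ 𝓕⁻ (fun ξ => fracMultiplier t ξ • g ξ) := by
    ext y
    have hlim := (tendsto_jumpIntegral_fracKernel ht (by linarith) he T hg hgt y).const_smul
      (levySymbol (fracKernel t) e)⁻¹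
    rw [inv_smul_smul₀ (levySymbol_fracKernel_ne_zero ht (by linarith) he), ← hu] at hlim
    exact tendsto_nhds_unique (hw y) hlim
  refine ⟨_, hu ▸ tendsto_jumpIntegral_fracKernel (add_pos hs ht) hst he T hg hgst x, ?_⟩
  have hlim := (tendsto_jumpIntegral_fracKernel hs (by linarith) he T hgt
    (hmul ▸ hgst) x).const_smul (levySymbol (fracKernel s) e)⁻¹
  rw [inv_smul_smul₀ (levySymbol_fracKernel_ne_zero hs (by linarith) he), hmul] at hlim
  rwa [inv_smul_smul₀ (levySymbol_fracKernel_ne_zero (add_pos hs ht) hst he), hw_fourier]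

lemma schwartzMap_eq_re_comp_fourierInv (u : SchwartzMap V ℝ) :
    ⇑u = Complex.reCLM ∘ 𝓕⁻ ⇑(𝓕 (u.postcompCLM Complex.ofRealCLM) : SchwartzMap V ℂ) := by
  ext y
  rw [← SchwartzMap.fourierInv_coe, FourierTransform.fourierInv_fourier_eq]
  rfl

end Semigroup

lemma setIntegral_div_norm_rpow_eq_jumpIntegral {n : ℕ} (r ε : ℝ)
    (f : EuclideanSpace ℝ (Fin n) → ℝ) (x : EuclideanSpace ℝ (Fin n)) :
    ∫ y in {y : EuclideanSpace ℝ (Fin n) | ε < ‖y - x‖},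
        (f x - f y) / ‖x - y‖ ^ ((n : ℝ) + 2 * r) =
      jumpIntegral (truncatedKernel (fracKernel r) ε) f x := by
  simp only [← setIntegral_smul_sub_eq_jumpIntegral (fracKernel_even r), fracKernel,
    finrank_euclideanSpace_fin, smul_eq_mul, div_eq_inv_mul]

lemma fracC_eq_inv_levySymbol (n : ℕ) (hn : 1 ≤ n) (r : ℝ) :
    fracC n hn r =
      (levySymbol (fracKernel r) (EuclideanSpace.single (⟨0, hn⟩ : Fin n) (1 : ℝ)))⁻¹ := by
  simp only [fracC, levySymbol, fracKernel, finrank_euclideanSpace_fin,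
    EuclideanSpace.inner_single_left, map_one, one_mul, div_eq_mul_inv]

/-- Semigroup property of the fractional Laplacian on Schwartz
functions: if `w = (−Δ)^t u` (defined pointwise as a principal value), then the
principal value defining `(−Δ)^s w (x)` exists and equals `(−Δ)^{s+t} u (x)`. -/
theorem fractionalLaplacian_semigroup
    (n : ℕ) (hn : 1 ≤ n) (s t : ℝ)
    (hs : s ∈ Set.Ioo (0:ℝ) 1) (ht : t ∈ Set.Ioo (0:ℝ) 1) (hst : s + t < 1)
    (u : SchwartzMap (EuclideanSpace ℝ (Fin n)) ℝ)
    (w : EuclideanSpace ℝ (Fin n) → ℝ)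
    (hw : ∀ x : EuclideanSpace ℝ (Fin n),
      Filter.Tendsto
        (fun ε : ℝ => fracC n hn t *
          ∫ y in {y : EuclideanSpace ℝ (Fin n) | ε < ‖y - x‖},
            (u x - u y) / ‖x - y‖ ^ ((n : ℝ) + 2 * t))
        (𝓝[>] (0:ℝ)) (𝓝 (w x)))
    (x : EuclideanSpace ℝ (Fin n)) :
    ∃ L : ℝ,
      Filter.Tendsto
        (fun ε : ℝ => ∫ y in {y : EuclideanSpace ℝ (Fin n) | ε < ‖y - x‖},
          (u x - u y) / ‖x - y‖ ^ ((n : ℝ) + 2 * (s + t)))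
        (𝓝[>] (0:ℝ)) (𝓝 L) ∧
      Filter.Tendsto
        (fun ε : ℝ => fracC n hn s *
          ∫ y in {y : EuclideanSpace ℝ (Fin n) | ε < ‖y - x‖},
            (w x - w y) / ‖x - y‖ ^ ((n : ℝ) + 2 * s))
        (𝓝[>] (0:ℝ)) (𝓝 (fracC n hn (s + t) * L)) := by
  simp only [fracC_eq_inv_levySymbol, setIntegral_div_norm_rpow_eq_jumpIntegral] at hw ⊢
  exact fractionalLaplacian_semigroup_general hs.1 ht.1 hst (by simp) Complex.reCLM
    (SchwartzMap.integrable _) (integrable_fracMultiplier_smul_schwartzMap (add_pos hs.1 ht.1).le _)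
    (schwartzMap_eq_re_comp_fourierInv u) hw x
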